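/- arXiv:2011.03434 — 2 statements merged into one kernel-verified Lean document; each statement's English description precedes it below -/
import Mathlib

section
/- Suppose |A| = |B| = n0 and M is a popular perfect matching in G, i.e., a perfect matching with Δ(M,N) ≥ 0 for every perfect matching N in G. Then there exists a stable matching S in G* such that S is a perfect matching in G* and S' = M. -/
open Classical

noncomputable section

namespace PopMax

/-- A bipartite preference instance `G = (A ∪ B, E)`:
`E a b` says there is an edge between `a ∈ A` and `b ∈ B`;
`prefA a b b'` says `a` strictly prefers `b` to `b'`;
`prefB b a a'` says `b` strictly prefers `a` to `a'`. -/
structure PrefSys (A : Type*) (B : Type*) where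
  E : A → B → Prop
  prefA : A → B → B → Prop
  prefB : B → A → A → Prop

/-- Every node has a strict (linear) preference order over its neighbors. -/
def PrefSys.IsValid {A B : Type*} (I : PrefSys A B) : Prop :=
  (∀ a b, ¬ I.prefA a b b) ∧
  (∀ a b₁ b₂ b₃, I.prefA a b₁ b₂ → I.prefA a b₂ b₃ → I.prefA a b₁ b₃) ∧
  (∀ a b₁ b₂, I.E a b₁ → I.E a b₂ → b₁ ≠ b₂ → I.prefA a b₁ b₂ ∨ I.prefA a b₂ b₁) ∧
  (∀ b a, ¬ I.prefB b a a) ∧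
  (∀ b a₁ a₂ a₃, I.prefB b a₁ a₂ → I.prefB b a₂ a₃ → I.prefB b a₁ a₃) ∧
  (∀ b a₁ a₂, I.E a₁ b → I.E a₂ b → a₁ ≠ a₂ → I.prefB b a₁ a₂ ∨ I.prefB b a₂ a₁)

variable {A B : Type*}

/-- A matching: a set of pairwise disjoint edges. -/
def IsMatching (I : PrefSys A B) (M : Finset (A × B)) : Prop :=
  (∀ p ∈ M, I.E p.1 p.2) ∧
  (∀ p ∈ M, ∀ q ∈ M, p.1 = q.1 → p = q) ∧
  (∀ p ∈ M, ∀ q ∈ M, p.2 = q.2 → p = q)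

def matchedA (M : Finset (A × B)) (a : A) : Prop := ∃ b, (a, b) ∈ M
def matchedB (M : Finset (A × B)) (b : B) : Prop := ∃ a, (a, b) ∈ M

/-- A maximum matching: a matching of maximum cardinality. -/
def IsMaximumMatching (I : PrefSys A B) (M : Finset (A × B)) : Prop :=
  IsMatching I M ∧ ∀ N : Finset (A × B), IsMatching I N → N.card ≤ M.card

/-- A perfect matching matches all nodes. -/
def IsPerfectMatching (I : PrefSys A B) (M : Finset (A × B)) : Prop :=
  IsMatching I M ∧ (∀ a, matchedA M a) ∧ (∀ b, matchedB M b)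

/-- `a ∈ A` prefers matching `M` to matching `N`. -/
def prefersA (I : PrefSys A B) (a : A) (M N : Finset (A × B)) : Prop :=
  ∃ b, (a, b) ∈ M ∧ (¬ matchedA N a ∨ ∃ b', (a, b') ∈ N ∧ I.prefA a b b')

/-- `b ∈ B` prefers matching `M` to matching `N`. -/
def prefersB (I : PrefSys A B) (b : B) (M N : Finset (A × B)) : Prop :=
  ∃ a, (a, b) ∈ M ∧ (¬ matchedB N b ∨ ∃ a', (a', b) ∈ N ∧ I.prefB b a a')

/-- A node `u ∈ A ∪ B` prefers matching `M` to matching `N`. -/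
def prefers (I : PrefSys A B) (u : A ⊕ B) (M N : Finset (A × B)) : Prop :=
  match u with
  | Sum.inl a => prefersA I a M N
  | Sum.inr b => prefersB I b M N

/-- `φ(M,N)`: the number of nodes preferring `M` to `N`. -/
def phi [Fintype A] [Fintype B] (I : PrefSys A B) (M N : Finset (A × B)) : ℕ :=
  (Finset.univ.filter (fun u : A ⊕ B => prefers I u M N)).card

/-- `Δ(M,N) = φ(M,N) − φ(N,M)`. -/
def Delta [Fintype A] [Fintype B] (I : PrefSys A B) (M N : Finset (A × B)) : ℤ :=
  (phi I M N : ℤ) - (phi I N M : ℤ)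

/-- A popular max-matching: a maximum matching `M` with `Δ(M,N) ≥ 0`
for every maximum matching `N`. -/
def IsPopularMaxMatching [Fintype A] [Fintype B] (I : PrefSys A B)
    (M : Finset (A × B)) : Prop :=
  IsMaximumMatching I M ∧
    ∀ N : Finset (A × B), IsMaximumMatching I N → 0 ≤ Delta I M N

/-- The edge `(a,b) ∉ M` blocks `M`. -/
def Blocks (I : PrefSys A B) (M : Finset (A × B)) (a : A) (b : B) : Prop :=
  I.E a b ∧ (a, b) ∉ M ∧
  (¬ matchedA M a ∨ ∃ b', (a, b') ∈ M ∧ I.prefA a b b') ∧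
  (¬ matchedB M b ∨ ∃ a', (a', b) ∈ M ∧ I.prefB b a a')

/-- A stable matching: a matching with no blocking edge. -/
def IsStable (I : PrefSys A B) (S : Finset (A × B)) : Prop :=
  IsMatching I S ∧ ∀ a b, ¬ Blocks I S a b

/-- The edge weight `wt_M(a,b) ∈ {0, ±2}`. -/
def wt (I : PrefSys A B) (M : Finset (A × B)) (a : A) (b : B) : ℤ :=
  if Blocks I M a b then 2
  else if (∃ b', (a, b') ∈ M ∧ I.prefA a b' b) ∧ (∃ a', (a', b) ∈ M ∧ I.prefB b a' a) then -2
  else 0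

/-- The underlying simple graph on the node set `A ⊕ B`. -/
def graphOf (I : PrefSys A B) : SimpleGraph (A ⊕ B) :=
  SimpleGraph.fromRel (fun u w =>
    match u, w with
    | Sum.inl a, Sum.inr b => I.E a b
    | _, _ => False)

/-- The (undirected) edge `e` is an edge of the matching `M`. -/
def edgeInM (M : Finset (A × B)) (e : Sym2 (A ⊕ B)) : Prop :=
  ∃ a b, (a, b) ∈ M ∧ e = s(Sum.inl a, Sum.inr b)

/-- Consecutive edges alternate between `M` and `E ∖ M`. -/
def altRel (M : Finset (A × B)) (e f : Sym2 (A ⊕ B)) : Prop :=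
  edgeInM M e ↔ ¬ edgeInM M f

/-- An alternating path with respect to `M`. -/
def IsAltPath (I : PrefSys A B) (M : Finset (A × B)) {u w : A ⊕ B}
    (p : (graphOf I).Walk u w) : Prop :=
  p.IsPath ∧ List.Chain' (altRel M) p.edges

/-- An alternating cycle with respect to `M` (alternation also across the wrap-around). -/
def IsAltCycle (I : PrefSys A B) (M : Finset (A × B)) {w : A ⊕ B}
    (c : (graphOf I).Walk w w) : Prop :=
  c.IsCycle ∧ List.Chain' (altRel M) (c.edges ++ c.edges.take 1)

/-- `wt_M` as a function on undirected edges. -/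
def wtSym (I : PrefSys A B) (M : Finset (A × B)) : Sym2 (A ⊕ B) → ℤ :=
  Sym2.lift ⟨fun u w =>
      match u, w with
      | Sum.inl a, Sum.inr b => wt I M a b
      | Sum.inr b, Sum.inl a => wt I M a b
      | _, _ => 0,
    by rintro (a | b) (a' | b') <;> rfl⟩

/-- `wt_M(ρ) = Σ_{e ∈ ρ} wt_M(e)` for a walk `ρ`. -/
def wtWalk (I : PrefSys A B) (M : Finset (A × B)) {u w : A ⊕ B}
    (p : (graphOf I).Walk u w) : ℤ :=
  (p.edges.map (wtSym I M)).sum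

/-- The node `u ∈ A ∪ B` is unmatched in `M`. -/
def unmatchedNode (M : Finset (A × B)) : A ⊕ B → Prop
  | Sum.inl a => ¬ matchedA M a
  | Sum.inr b => ¬ matchedB M b

/-- The set of edges `(a,b) ∈ A × B` used by the walk `p`. -/
def pairsOf [Fintype A] [Fintype B] (I : PrefSys A B) {u w : A ⊕ B}
    (p : (graphOf I).Walk u w) : Finset (A × B) :=
  Finset.univ.filter (fun ab : A × B => s(Sum.inl ab.1, Sum.inr ab.2) ∈ p.edges)

/-- `M` is Pareto-optimal: no matching `N` has `φ(N,M) > 0` and `φ(M,N) = 0`. -/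
def IsParetoOptimal [Fintype A] [Fintype B] (I : PrefSys A B) (M : Finset (A × B)) : Prop :=
  ¬ ∃ N : Finset (A × B), IsMatching I N ∧ 0 < phi I N M ∧ phi I M N = 0

/-! ### The auxiliary instance `G*` -/

/-- `A* = {a_0, …, a_{n0−1} : a ∈ A}` where `n0 = |A|`. -/
abbrev AStar (A : Type*) [Fintype A] : Type _ := A × Fin (Fintype.card A)

/-- `B* = B̃ ∪ {d_1(a), …, d_{n0−1}(a) : a ∈ A}`; the dummy node `(a, j)`
(with `j : Fin (n0 − 1)`) stands for `d_{j+1}(a)`. -/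
abbrev BStar (A : Type*) (B : Type*) [Fintype A] : Type _ :=
  B ⊕ (A × Fin (Fintype.card A - 1))

/-- The auxiliary instance `G*` with its edges and preferences. -/
def starSys [Fintype A] (I : PrefSys A B) : PrefSys (AStar A) (BStar A B) where
  E := fun ai w =>
    match ai, w with
    | (a, _i), Sum.inl b => I.E a b
    | (a, i), Sum.inr (a', j) => a = a' ∧ ((i : ℕ) = (j : ℕ) ∨ (i : ℕ) = (j : ℕ) + 1)
  prefA := fun ai u v =>
    match ai, u, v with
    | (a, _i), Sum.inl b, Sum.inl b' => I.prefA a b b'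
    | (a, i), Sum.inl _b, Sum.inr (a', j) => a = a' ∧ (j : ℕ) = (i : ℕ)
    | (a, i), Sum.inr (a', j), Sum.inl _b => a = a' ∧ (j : ℕ) + 1 = (i : ℕ)
    | (a, i), Sum.inr (a', j), Sum.inr (a'', j') =>
        a = a' ∧ a = a'' ∧ (j : ℕ) + 1 = (i : ℕ) ∧ (j' : ℕ) = (i : ℕ)
  prefB := fun w x y =>
    match w, x, y with
    | Sum.inl b, (a, i), (a', i') =>
        (i' : ℕ) < (i : ℕ) ∨ ((i : ℕ) = (i' : ℕ) ∧ I.prefB b a a')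
    | Sum.inr (a, j), (a', i), (a'', i') =>
        a' = a ∧ a'' = a ∧ (i : ℕ) = (j : ℕ) ∧ (i' : ℕ) = (j : ℕ) + 1

/-- The projection `S ↦ S'`: delete edges incident to dummy nodes and replace
`(a_i, b̃)` by `(a, b)`. -/
def proj [Fintype A] [Fintype B] (S : Finset (AStar A × BStar A B)) : Finset (A × B) :=
  Finset.univ.filter (fun ab : A × B =>
    ∃ i : Fin (Fintype.card A), ((ab.1, i), (Sum.inl ab.2 : BStar A B)) ∈ S)

/-- `a ∈ A_i` for the level partition of `A` induced by a (stable) matching `S` in `G*`: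
for `i ≤ n0 − 2`, `a ∈ A_i` iff `(a_i, b̃) ∈ S` for some `b̃ ∈ B̃`;
`A_{n0−1}` consists of all remaining nodes of `A`. -/
def AtLevelA [Fintype A] (S : Finset (AStar A × BStar A B)) (a : A) (i : ℕ) : Prop :=
  (i + 1 < Fintype.card A ∧
     ∃ j : Fin (Fintype.card A), (j : ℕ) = i ∧
       ∃ b : B, ((a, j), (Sum.inl b : BStar A B)) ∈ S) ∨
  (i + 1 = Fintype.card A ∧
     ∀ j : Fin (Fintype.card A), (j : ℕ) + 1 < Fintype.card A →
       ∀ b : B, ((a, j), (Sum.inl b : BStar A B)) ∉ S)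

/-- `b ∈ B_i` for the level partition of `B` induced by a (stable) matching `S` in `G*`:
for `1 ≤ i ≤ n0 − 1`, `b ∈ B_i` iff `(a_i, b̃) ∈ S` for some `a ∈ A_i`;
`B_0` consists of all remaining nodes of `B`. -/
def AtLevelB [Fintype A] (S : Finset (AStar A × BStar A B)) (b : B) (i : ℕ) : Prop :=
  (1 ≤ i ∧ i < Fintype.card A ∧
     ∃ j : Fin (Fintype.card A), (j : ℕ) = i ∧
       ∃ a : A, AtLevelA S a i ∧ ((a, j), (Sum.inl b : BStar A B)) ∈ S) ∨
  (i = 0 ∧ ∀ j : Fin (Fintype.card A), 1 ≤ (j : ℕ) →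
       ∀ a : A, AtLevelA S a (j : ℕ) → ((a, j), (Sum.inl b : BStar A B)) ∉ S)

/-!
A perfect matching `N` beats `M` by exactly the total weight `wt_M(N)`, so popularity of `M` says
that no permutation of `A`, read as an exchange of `M`-partners along edges of `G`, has positive
weight. Applied to cyclic permutations, this forbids cycles of positive weight, hence the maximum
weights of simple paths form a potential. Since `wt_M` takes values in `{0, ±2}`, half of this
potential assigns to each `a` an integer level in `{0, …, n0 - 1}`. Matching the copy of `a` at its
level to the partner of `a` in `M`, and the other copies to the dummies of `a`, gives a perfect
matching of `G*`, and the potential inequality is exactly what excludes blocking edges.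
-/

section Potential

variable {V G : Type*}

/-- The sum of `f` over the consecutive pairs of `l`: the weight of the walk that visits the
vertices of `l` in order. -/
def walkWeight [AddMonoid G] (f : V → V → G) (l : List V) : G :=
  (List.zipWith f l l.tail).sum

/-- `x :: l` lists the vertices of a simple path in the digraph `R`; the starting vertex `x` is
kept apart so that the path is nonempty. -/
structure IsSimplePath (R : V → V → Prop) (x : V) (l : List V) : Prop where
  nodup : (x :: l).Nodup
  isChain : (x :: l).IsChain R

/-- `x :: l` lists the vertices of a simple cycle in the digraph `R`, the last one of which is
joined to `x`. The case `l = []` is a loop at `x`. -/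
structure IsSimpleCycle (R : V → V → Prop) (x : V) (l : List V) : Prop where
  nodup : (x :: l).Nodup
  isChain : (x :: (l ++ [x])).IsChain R

theorem walkWeight_singleton [AddMonoid G] (f : V → V → G) (x : V) : walkWeight f [x] = 0 := rfl

theorem walkWeight_cons_cons [AddMonoid G] (f : V → V → G) (x y : V) (l : List V) :
    walkWeight f (x :: y :: l) = f x y + walkWeight f (y :: l) := by
  simp [walkWeight]

theorem walkWeight_cons_append_cons [AddMonoid G] (f : V → V → G) (x y : V) (l₁ l₂ : List V) :
    walkWeight f (x :: (l₁ ++ y :: l₂)) =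
      walkWeight f (x :: (l₁ ++ [y])) + walkWeight f (y :: l₂) := by
  induction l₁ generalizing x with
  | nil => simp [walkWeight_cons_cons, walkWeight_singleton]
  | cons z l₁ ih => simp only [List.cons_append, walkWeight_cons_cons, ih, add_assoc]

theorem walkWeight_cons_le [AddCommMonoid G] [PartialOrder G] [IsOrderedAddMonoid G]
    {f : V → V → G} {c : G} (hf : ∀ x y, f x y ≤ c) (x : V) (l : List V) :
    walkWeight f (x :: l) ≤ l.length • c := by
  induction l generalizing x with
  | nil => simp [walkWeight_singleton]
  | cons y l ih =>
    rw [walkWeight_cons_cons, List.length_cons, succ_nsmul']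
    exact add_le_add (hf x y) (ih y)

theorem map_formPerm_cons [DecidableEq V] {x : V} {l : List V} (hl : (x :: l).Nodup) :
    (x :: l).map (x :: l).formPerm = l ++ [x] := by
  refine List.ext_getElem (by simp) fun i hi _ => ?_
  rw [List.getElem_map, List.formPerm_apply_getElem _ hl]
  rcases Nat.lt_or_ge i l.length with hlt | hge
  · simp [Nat.mod_eq_of_lt (Nat.succ_lt_succ hlt), hlt]
  · obtain rfl : i = l.length := by
      simp only [List.length_map, List.length_cons] at hi
      omega
    simp

theorem sum_apply_formPerm [AddCommMonoid G] [Fintype V] [DecidableEq V] {f : V → V → G}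
    (hf : ∀ v, f v v = 0) {x : V} {l : List V} (hl : (x :: l).Nodup) :
    ∑ v, f v ((x :: l).formPerm v) = walkWeight f (x :: (l ++ [x])) :=
  calc ∑ v, f v ((x :: l).formPerm v)
      = ∑ v ∈ (x :: l).toFinset, f v ((x :: l).formPerm v) := by
        refine (Finset.sum_subset (Finset.subset_univ _) fun v _ hv => ?_).symm
        rw [List.formPerm_apply_of_notMem (mt List.mem_toFinset.2 hv), hf]
    _ = (List.zipWith f (x :: l) ((x :: l).map (x :: l).formPerm)).sum := by
        rw [List.sum_toFinset _ hl, List.zipWith_map_right, List.zipWith_self]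
    _ = walkWeight f (x :: (l ++ [x])) := by
        rw [map_formPerm_cons hl, walkWeight, List.tail_cons, ← List.cons_append,
          ← List.append_nil (l ++ [x]), List.zipWith_append (by simp)]
        simp

theorem IsSimpleCycle.rel_formPerm [DecidableEq V] {R : V → V → Prop} (hR : ∀ v, R v v) {x : V}
    {l : List V} (hl : IsSimpleCycle R x l) (v : V) : R v ((x :: l).formPerm v) := by
  by_cases hv : v ∈ x :: l
  · obtain ⟨i, hi, rfl⟩ := List.getElem_of_mem hv
    have hstart : (x :: (l ++ [x]))[i]'(hi.trans_le (by simp)) = (x :: l)[i] :=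
      List.getElem_append_left (as := x :: l) hi
    have hnext : (x :: l).formPerm (x :: l)[i] = (l ++ [x])[i]'(by simpa using hi) := by
      simp only [← map_formPerm_cons hl.nodup, List.getElem_map]
    rw [hnext, ← hstart]
    exact List.isChain_iff_getElem.1 hl.isChain i (by simpa using hi)
  · rw [List.formPerm_apply_of_notMem hv]
    exact hR v

theorem exists_simplePath_walkWeight_max [AddMonoid G] [LinearOrder G] [Finite V]
    (R : V → V → Prop) (f : V → V → G) (x : V) :
    ∃ l, IsSimplePath R x l ∧
      ∀ l', IsSimplePath R x l' → walkWeight f (x :: l') ≤ walkWeight f (x :: l) := by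
  have := Fintype.ofFinite V
  have : Finite {l : List V // l.Nodup} := inferInstance
  have hfinite : {l | IsSimplePath R x l}.Finite :=
    (Set.finite_coe_iff.1 this).subset fun l hl => hl.nodup.of_cons
  exact hfinite.exists_maximalFor (fun l => walkWeight f (x :: l)) _
    ⟨[], List.nodup_singleton x, List.isChain_singleton x⟩ |>.imp fun l hl =>
      ⟨hl.1, fun l' hl' => (le_total _ _).elim id (hl.2 hl')⟩

theorem IsSimplePath.cons_or_split {R : V → V → Prop} {x y : V} {l : List V}
    (hl : IsSimplePath R y l) (hxy : R x y) :
    IsSimplePath R x (y :: l) ∨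
      ∃ l₁ l₂, y :: l = l₁ ++ x :: l₂ ∧ IsSimpleCycle R x l₁ ∧ IsSimplePath R x l₂ := by
  have hchain : (x :: y :: l).IsChain R := List.isChain_cons_cons.2 ⟨hxy, hl.isChain⟩
  by_cases hx : x ∈ y :: l
  · obtain ⟨l₁, l₂, hsplit⟩ := List.append_of_mem hx
    have hnodup := hl.nodup
    rw [hsplit, List.nodup_middle] at hnodup
    rw [hsplit, ← List.cons_append, List.isChain_split] at hchain
    refine .inr ⟨l₁, l₂, hsplit, ⟨?_, hchain.1⟩, ⟨?_, hchain.2⟩⟩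
    · exact hnodup.sublist (.cons_cons _ (List.sublist_append_left l₁ l₂))
    · exact hnodup.sublist (.cons_cons _ (List.sublist_append_right l₁ l₂))
  · exact .inl ⟨List.nodup_cons.2 ⟨hx, hl.nodup⟩, hchain⟩

theorem exists_potential_of_simpleCycle_nonpos [AddCommMonoid G] [LinearOrder G]
    [IsOrderedAddMonoid G] [Finite V] {R : V → V → Prop} {f : V → V → G}
    (hcycle : ∀ x l, IsSimpleCycle R x l → walkWeight f (x :: (l ++ [x])) ≤ 0) :
    ∃ h : V → G, (∀ x, 0 ≤ h x) ∧ (∀ x, ∃ l, IsSimplePath R x l ∧ h x = walkWeight f (x :: l)) ∧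
      ∀ x y, R x y → f x y + h y ≤ h x := by
  choose path hpath hmax using exists_simplePath_walkWeight_max R f
  refine ⟨fun x => walkWeight f (x :: path x), fun x => ?_, fun x => ⟨_, hpath x, rfl⟩,
    fun x y hxy => ?_⟩
  · exact hmax x [] ⟨List.nodup_singleton x, List.isChain_singleton x⟩
  rw [← walkWeight_cons_cons]
  rcases (hpath y).cons_or_split hxy with hsimple | ⟨l₁, l₂, hsplit, hl₁, hl₂⟩
  · exact hmax x _ hsimple
  · rw [hsplit, walkWeight_cons_append_cons]
    exact add_le_of_nonpos_of_le (hcycle x l₁ hl₁) (hmax x l₂ hl₂)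

theorem exists_potential_of_perm_sum_nonpos [Fintype V] {R : V → V → Prop} {f : V → V → ℤ}
    (hR : ∀ v, R v v) (hf : ∀ v, f v v = 0) (hf_le : ∀ x y, f x y ≤ 1)
    (hperm : ∀ σ : Equiv.Perm V, (∀ v, R v (σ v)) → ∑ v, f v (σ v) ≤ 0) :
    ∃ h : V → Fin (Fintype.card V), ∀ x y, R x y → f x y + (h y : ℕ) ≤ (h x : ℕ) := by
  obtain ⟨h, hnonneg, hpath, hle⟩ := exists_potential_of_simpleCycle_nonpos
    fun x l (hl : IsSimpleCycle R x l) =>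
      sum_apply_formPerm hf hl.nodup ▸ hperm _ (hl.rel_formPerm hR)
  have hlt (v : V) : (h v).toNat < Fintype.card V := by
    obtain ⟨l, hl, hv⟩ := hpath v
    have hweight : h v ≤ l.length • (1 : ℤ) := hv ▸ walkWeight_cons_le hf_le v l
    have hcard : l.length + 1 ≤ Fintype.card V := hl.nodup.length_le_card
    rw [nsmul_one] at hweight
    omega
  refine ⟨fun v => ⟨(h v).toNat, hlt v⟩, fun x y hxy => ?_⟩
  simpa only [Int.toNat_of_nonneg (hnonneg _)] using hle x y hxy

end Potential

section Vote

variable {α : Type*} {r : α → α → Prop} {x y : α}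

/-- The vote of a node with preference relation `r` for `x` against `y`: `1` if it prefers `x`,
`-1` if it prefers `y`, and `0` if it prefers neither. -/
def vote (r : α → α → Prop) (x y : α) : ℤ :=
  (if r x y then 1 else 0) - (if r y x then 1 else 0)

theorem vote_self (r : α → α → Prop) (x : α) : vote r x x = 0 := sub_self _

theorem neg_vote (r : α → α → Prop) (x y : α) : -vote r x y = vote r y x := neg_sub _ _

theorem neg_one_le_vote (r : α → α → Prop) (x y : α) : -1 ≤ vote r x y := by
  unfold vote; split_ifs <;> decide

theorem vote_eq_one [Std.Asymm r] (h : r x y) : vote r x y = 1 := by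
  simp [vote, h, Std.Asymm.asymm _ _ h]

theorem vote_eq_neg_one [Std.Asymm r] (h : r y x) : vote r x y = -1 := by
  rw [← neg_vote, vote_eq_one h]

end Vote

theorem PrefSys.IsValid.isStrictOrder_prefA {I : PrefSys A B} (hI : I.IsValid) (a : A) :
    IsStrictOrder B (I.prefA a) where
  irrefl := hI.1 a
  trans := hI.2.1 a

theorem PrefSys.IsValid.isStrictOrder_prefB {I : PrefSys A B} (hI : I.IsValid) (b : B) :
    IsStrictOrder A (I.prefB b) where
  irrefl := hI.2.2.2.1 b
  trans := hI.2.2.2.2.1 b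

theorem two_dvd_wt (I : PrefSys A B) (M : Finset (A × B)) (a : A) (b : B) : 2 ∣ wt I M a b := by
  unfold wt; split_ifs <;> decide

theorem wt_le_two (I : PrefSys A B) (M : Finset (A × B)) (a : A) (b : B) : wt I M a b ≤ 2 := by
  unfold wt; split_ifs <;> decide

section MatchingOfEquiv

variable [Fintype A] {I : PrefSys A B} {m n : A ≃ B} {a : A} {b : B}

/-- The matching of the complete bipartite graph in which `a` is matched to `m a`. The perfect
matchings of `I` are the `matchingOfEquiv m` all of whose edges lie in `I.E`. -/
def matchingOfEquiv (m : A ≃ B) : Finset (A × B) :=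
  Finset.univ.image fun a => (a, m a)

theorem mem_matchingOfEquiv : (a, b) ∈ matchingOfEquiv m ↔ m a = b := by
  simp [matchingOfEquiv]

theorem exists_mem_matchingOfEquiv_left {p : B → Prop} :
    (∃ b, (a, b) ∈ matchingOfEquiv m ∧ p b) ↔ p (m a) := by
  simp [mem_matchingOfEquiv]

theorem exists_mem_matchingOfEquiv_right {p : A → Prop} :
    (∃ a, (a, b) ∈ matchingOfEquiv m ∧ p a) ↔ p (m.symm b) := by
  simp [mem_matchingOfEquiv, ← Equiv.eq_symm_apply]

theorem matchedA_matchingOfEquiv (m : A ≃ B) (a : A) : matchedA (matchingOfEquiv m) a :=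
  ⟨m a, mem_matchingOfEquiv.2 rfl⟩

theorem matchedB_matchingOfEquiv (m : A ≃ B) (b : B) : matchedB (matchingOfEquiv m) b :=
  ⟨m.symm b, mem_matchingOfEquiv.2 (m.apply_symm_apply b)⟩

theorem isPerfectMatching_matchingOfEquiv (hm : ∀ a, I.E a (m a)) :
    IsPerfectMatching I (matchingOfEquiv m) := by
  refine ⟨⟨?_, ?_, ?_⟩, matchedA_matchingOfEquiv m, matchedB_matchingOfEquiv m⟩
  · rintro ⟨a, b⟩ hab
    exact mem_matchingOfEquiv.1 hab ▸ hm a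
  · rintro ⟨a, b⟩ hab ⟨a', b'⟩ hab' (rfl : a = a')
    exact congrArg _ ((mem_matchingOfEquiv.1 hab).symm.trans (mem_matchingOfEquiv.1 hab'))
  · rintro ⟨a, b⟩ hab ⟨a', b'⟩ hab' (rfl : b = b')
    rw [mem_matchingOfEquiv] at hab hab'
    rw [m.injective (hab.trans hab'.symm)]

theorem IsPerfectMatching.exists_eq_matchingOfEquiv {M : Finset (A × B)}
    (hM : IsPerfectMatching I M) :
    ∃ m : A ≃ B, (∀ a, I.E a (m a)) ∧ M = matchingOfEquiv m := by
  obtain ⟨⟨hedge, huniqueA, huniqueB⟩, hA, hB⟩ := hM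
  choose partner hpartner using hA
  have partner_eq {a b} (hab : (a, b) ∈ M) : partner a = b :=
    congrArg Prod.snd (huniqueA _ (hpartner a) _ hab rfl)
  have hbij : Function.Bijective partner :=
    ⟨fun a a' h => congrArg Prod.fst (huniqueB _ (hpartner a) _ (hpartner a') h),
      fun b => (hB b).imp fun _ => partner_eq⟩
  refine ⟨.ofBijective partner hbij, fun a => hedge _ (hpartner a), Finset.ext fun ⟨a, b⟩ => ?_⟩
  rw [mem_matchingOfEquiv, Equiv.ofBijective_apply]
  exact ⟨partner_eq, fun h => h ▸ hpartner a⟩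

theorem blocks_matchingOfEquiv :
    Blocks I (matchingOfEquiv m) a b ↔
      I.E a b ∧ m a ≠ b ∧ I.prefA a b (m a) ∧ I.prefB b a (m.symm b) := by
  simp only [Blocks, matchedA_matchingOfEquiv, matchedB_matchingOfEquiv, not_true, false_or,
    exists_mem_matchingOfEquiv_left, exists_mem_matchingOfEquiv_right]
  rw [mem_matchingOfEquiv]

theorem prefersA_matchingOfEquiv :
    prefersA I a (matchingOfEquiv m) (matchingOfEquiv n) ↔ I.prefA a (m a) (n a) := by
  simp only [prefersA, exists_mem_matchingOfEquiv_left, matchedA_matchingOfEquiv, not_true,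
    false_or]

theorem prefersB_matchingOfEquiv :
    prefersB I b (matchingOfEquiv m) (matchingOfEquiv n) ↔
      I.prefB b (m.symm b) (n.symm b) := by
  simp only [prefersB, exists_mem_matchingOfEquiv_right, matchedB_matchingOfEquiv, not_true,
    false_or]

theorem Delta_matchingOfEquiv [Fintype B] (I : PrefSys A B) (m n : A ≃ B) :
    Delta I (matchingOfEquiv m) (matchingOfEquiv n) =
      ∑ a, vote (I.prefA a) (m a) (n a) + ∑ b, vote (I.prefB b) (m.symm b) (n.symm b) := by
  simp only [Delta, phi, Finset.card_filter, Fintype.sum_sum_type, prefers,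
    prefersA_matchingOfEquiv, prefersB_matchingOfEquiv, vote, Finset.sum_sub_distrib]
  push_cast
  ring

theorem wt_matchingOfEquiv (hI : I.IsValid) (hm : ∀ a, I.E a (m a)) (hab : I.E a b) :
    wt I (matchingOfEquiv m) a b =
      vote (I.prefA a) b (m a) + vote (I.prefB b) a (m.symm b) := by
  have := hI.isStrictOrder_prefA a
  have := hI.isStrictOrder_prefB b
  simp only [wt, blocks_matchingOfEquiv, exists_mem_matchingOfEquiv_left,
    exists_mem_matchingOfEquiv_right]
  by_cases hne : m a = b
  · subst hne
    simp [vote_self, irrefl]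
  have hne' : a ≠ m.symm b := fun h => hne (m.eq_symm_apply.1 h)
  have hm' : I.E (m.symm b) b := by simpa using hm (m.symm b)
  rcases hI.2.2.1 a _ _ hab (hm a) (Ne.symm hne) with hA | hA <;>
  rcases hI.2.2.2.2.2 b _ _ hab hm' hne' with hB | hB
  · simp [hab, hne, hA, hB, vote_eq_one]
  · simp [hA, hB, asymm hA, asymm hB, vote_eq_one, vote_eq_neg_one]
  · simp [hA, hB, asymm hA, asymm hB, vote_eq_one, vote_eq_neg_one]
  · simp [hA, hB, asymm hA, vote_eq_neg_one]

theorem Delta_matchingOfEquiv_eq_neg_sum_wt [Fintype B] (hI : I.IsValid)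
    (hm : ∀ a, I.E a (m a)) (hn : ∀ a, I.E a (n a)) :
    Delta I (matchingOfEquiv m) (matchingOfEquiv n) =
      -∑ a, wt I (matchingOfEquiv m) a (n a) := by
  rw [Delta_matchingOfEquiv, ← n.sum_comp, ← Finset.sum_add_distrib, ← Finset.sum_neg_distrib]
  refine Finset.sum_congr rfl fun a _ => ?_
  rw [wt_matchingOfEquiv hI hm (hn a), neg_add, neg_vote, neg_vote, n.symm_apply_apply]

end MatchingOfEquiv

section Level

variable [Fintype A] {I : PrefSys A B} {m : A ≃ B} {h : A → Fin (Fintype.card A)}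

/-- `h` certifies the popularity of the perfect matching `m`: no edge weighs more than twice the
difference of the levels of its ends, where `b` has the level of its partner. Giving `a` the value
`-2 * h a` and `b` the value `2 * h (m.symm b)` is then an optimal dual solution of the linear
program that maximizes `wt` over perfect matchings. -/
def IsLevelCertificate (I : PrefSys A B) (m : A ≃ B) (h : A → Fin (Fintype.card A)) : Prop :=
  ∀ a b, I.E a b → wt I (matchingOfEquiv m) a b + 2 * (h a : ℕ) ≤ 2 * (h (m.symm b) : ℕ)

theorem exists_isLevelCertificate [Fintype B] (hI : I.IsValid) (hm : ∀ a, I.E a (m a))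
    (hpop : ∀ n : A ≃ B, (∀ a, I.E a (n a)) →
      0 ≤ Delta I (matchingOfEquiv m) (matchingOfEquiv n)) :
    ∃ h, IsLevelCertificate I m h := by
  have two_mul_half (a b) : 2 * (wt I (matchingOfEquiv m) a b / 2) = wt I (matchingOfEquiv m) a b :=
    Int.mul_ediv_cancel' (two_dvd_wt I _ a b)
  have hdiag (x : A) : wt I (matchingOfEquiv m) x (m x) = 0 := by
    rw [wt_matchingOfEquiv hI hm (hm x), m.symm_apply_apply, vote_self, vote_self, add_zero]
  have hperm (σ : Equiv.Perm A) (hσ : ∀ x, I.E (σ x) (m x)) :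
      ∑ x, wt I (matchingOfEquiv m) (σ x) (m x) / 2 ≤ 0 := by
    have hn (a : A) : I.E a ((σ.symm.trans m) a) := by simpa using hσ (σ.symm a)
    have hDelta := hpop _ hn
    rw [Delta_matchingOfEquiv_eq_neg_sum_wt hI hm hn, ← Equiv.sum_comp σ] at hDelta
    simp only [Equiv.trans_apply, σ.symm_apply_apply] at hDelta
    have two_mul_sum_half : 2 * ∑ x, wt I (matchingOfEquiv m) (σ x) (m x) / 2 =
        ∑ x, wt I (matchingOfEquiv m) (σ x) (m x) := by
      simp only [Finset.mul_sum, two_mul_half]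
    linarith
  obtain ⟨h, hh⟩ := exists_potential_of_perm_sum_nonpos (R := fun x a => I.E a (m x))
    (f := fun x a => wt I (matchingOfEquiv m) a (m x) / 2) hm (fun x => by rw [hdiag]; rfl)
    (fun x a => by have := wt_le_two I (matchingOfEquiv m) a (m x); omega) hperm
  refine ⟨h, fun a b hab => ?_⟩
  have hlevel := hh (m.symm b) a (by simpa using hab)
  rw [m.apply_symm_apply] at hlevel
  linarith [two_mul_half a b]

/-- The perfect matching of `G*` in which the copy of `a` at level `h a` is matched to `m a`. The
copies below that level are matched to their last choice and the copies above it to their first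
choice, both of which are dummies. -/
def starEquiv (m : A ≃ B) (h : A → Fin (Fintype.card A)) : AStar A ≃ BStar A B where
  toFun
    | (a, i) =>
      if _ : (i : ℕ) < h a then .inr (a, ⟨i, by omega⟩)
      else if _ : h a < (i : ℕ) then .inr (a, ⟨i - 1, by omega⟩)
      else .inl (m a)
  invFun
    | .inl b => (m.symm b, h (m.symm b))
    | .inr (a, j) =>
      if (j : ℕ) < h a then (a, ⟨j, by omega⟩) else (a, ⟨j + 1, by omega⟩)
  left_inv := by
    rintro ⟨a, i⟩
    rcases lt_trichotomy (i : ℕ) (h a) with hi | hi | hi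
    · simp [hi]
    · simp [Fin.ext_iff, hi]
    · simp [hi, hi.not_gt, Nat.sub_one_add_one_eq_of_pos (Nat.zero_lt_of_lt hi),
        show ¬ (i : ℕ) - 1 < h a by omega]
  right_inv := by
    rintro (b | ⟨a, j⟩)
    · simp
    · by_cases hj : (j : ℕ) < h a
      · simp [hj]
      · simp [hj, show ¬ (j : ℕ) + 1 < h a by omega, show (h a : ℕ) < j + 1 by omega]

theorem starEquiv_apply_of_lt {a : A} {i : Fin (Fintype.card A)} (hi : (i : ℕ) < h a) :
    starEquiv m h (a, i) = .inr (a, ⟨i, by omega⟩) :=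
  dif_pos hi

theorem starEquiv_apply_of_gt {a : A} {i : Fin (Fintype.card A)} (hi : h a < (i : ℕ)) :
    starEquiv m h (a, i) = .inr (a, ⟨i - 1, by omega⟩) :=
  (dif_neg hi.not_gt).trans (dif_pos hi)

theorem starEquiv_apply_self (m : A ≃ B) (h : A → Fin (Fintype.card A)) (a : A) :
    starEquiv m h (a, h a) = .inl (m a) := by
  simp [starEquiv]

theorem starEquiv_symm_inl (m : A ≃ B) (h : A → Fin (Fintype.card A)) (b : B) :
    (starEquiv m h).symm (.inl b) = (m.symm b, h (m.symm b)) := rfl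

theorem starEquiv_symm_inr_of_lt {a : A} {j : Fin (Fintype.card A - 1)} (hj : (j : ℕ) < h a) :
    (starEquiv m h).symm (.inr (a, j)) = (a, ⟨j, by omega⟩) :=
  if_pos hj

theorem starEquiv_symm_inr_of_ge {a : A} {j : Fin (Fintype.card A - 1)} (hj : h a ≤ (j : ℕ)) :
    (starEquiv m h).symm (.inr (a, j)) = (a, ⟨j + 1, by omega⟩) :=
  if_neg hj.not_gt

theorem starSys_E_starEquiv (hm : ∀ a, I.E a (m a)) (ai : AStar A) :
    (starSys I).E ai (starEquiv m h ai) := by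
  obtain ⟨a, i⟩ := ai
  rcases lt_trichotomy (i : ℕ) (h a) with hi | hi | hi
  · rw [starEquiv_apply_of_lt hi]
    exact ⟨rfl, .inl rfl⟩
  · obtain rfl := Fin.ext hi
    rw [starEquiv_apply_self]
    exact hm a
  · rw [starEquiv_apply_of_gt hi]
    exact ⟨rfl, .inr (by simp only; omega)⟩

theorem proj_matchingOfEquiv_starEquiv [Fintype B] (m : A ≃ B)
    (h : A → Fin (Fintype.card A)) :
    proj (matchingOfEquiv (starEquiv m h)) = matchingOfEquiv m := by
  ext ⟨a, b⟩
  simp only [proj, Finset.mem_filter_univ, mem_matchingOfEquiv, ← Equiv.eq_symm_apply,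
    starEquiv_symm_inl, Prod.mk.injEq]
  exact ⟨fun ⟨_, ha, _⟩ => ha, fun ha => ⟨h (m.symm b), ha, rfl⟩⟩

theorem starSys_prefA_inl_starEquiv {a : A} {i : Fin (Fintype.card A)} {b : B}
    (hpref : (starSys I).prefA (a, i) (.inl b) (starEquiv m h (a, i))) :
    i < h a ∨ i = h a ∧ I.prefA a b (m a) := by
  rcases lt_trichotomy (i : ℕ) (h a) with hi | hi | hi
  · exact .inl hi
  · obtain rfl := Fin.ext hi
    rw [starEquiv_apply_self] at hpref
    exact .inr ⟨rfl, hpref⟩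
  · rw [starEquiv_apply_of_gt hi] at hpref
    have : (i : ℕ) - 1 = i := hpref.2
    omega

theorem not_blocks_starEquiv_inl (hI : I.IsValid) (hm : ∀ a, I.E a (m a))
    (hh : IsLevelCertificate I m h) (ai : AStar A) (b : B) :
    ¬ Blocks (starSys I) (matchingOfEquiv (starEquiv m h)) ai (.inl b) := by
  rw [blocks_matchingOfEquiv, starEquiv_symm_inl]
  rintro ⟨hab, -, hprefA, hprefB⟩
  obtain ⟨a, i⟩ := ai
  have := hI.isStrictOrder_prefA a
  have := hI.isStrictOrder_prefB b
  have hlevel := hh a b hab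
  rw [wt_matchingOfEquiv hI hm hab] at hlevel
  have hvoteA := neg_one_le_vote (I.prefA a) b (m a)
  have hvoteB := neg_one_le_vote (I.prefB b) a (m.symm b)
  rcases starSys_prefA_inl_starEquiv hprefA with hi | ⟨rfl, hA⟩ <;>
  rcases hprefB with hlt | ⟨heq, hB⟩
  · omega
  · have := vote_eq_one hB
    omega
  · have := vote_eq_one hA
    omega
  · have := vote_eq_one hA
    have := vote_eq_one hB
    omega

theorem not_blocks_starEquiv_inr (I : PrefSys A B) (m : A ≃ B) (h : A → Fin (Fintype.card A))
    (ai : AStar A) (d : A × Fin (Fintype.card A - 1)) :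
    ¬ Blocks (starSys I) (matchingOfEquiv (starEquiv m h)) ai (.inr d) := by
  rw [blocks_matchingOfEquiv]
  rintro ⟨-, -, hprefA, hprefB⟩
  obtain ⟨a, i⟩ := ai
  obtain ⟨c, j⟩ := d
  rcases lt_or_ge (j : ℕ) (h c) with hj | hj
  · rw [starEquiv_symm_inr_of_lt hj] at hprefB
    have : (j : ℕ) = j + 1 := hprefB.2.2.2
    omega
  · rw [starEquiv_symm_inr_of_ge hj] at hprefB
    obtain ⟨rfl, -, hij, -⟩ := hprefB
    have hji : (j : ℕ) + 1 = i := by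
      rcases hj.eq_or_lt with hlevel | hlevel
      · obtain rfl : i = h a := Fin.ext (hij.trans hlevel.symm)
        rw [starEquiv_apply_self] at hprefA
        exact hprefA.2
      · rw [starEquiv_apply_of_gt (hij ▸ hlevel)] at hprefA
        exact hprefA.2.2.1
    omega

theorem isStable_matchingOfEquiv_starEquiv (hI : I.IsValid) (hm : ∀ a, I.E a (m a))
    (hh : IsLevelCertificate I m h) :
    IsStable (starSys I) (matchingOfEquiv (starEquiv m h)) := by
  refine ⟨(isPerfectMatching_matchingOfEquiv (starSys_E_starEquiv hm)).1, fun ai w => ?_⟩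
  cases w with
  | inl b => exact not_blocks_starEquiv_inl hI hm hh ai b
  | inr d => exact not_blocks_starEquiv_inr I m h ai d

end Level

/-- If `|A| = |B| = n0` and `M` is a popular perfect matching in `G`,
then there is a stable matching `S` in `G*` that is a perfect matching in `G*` and
satisfies `S' = M`. -/
theorem stmt12 {A B : Type*} [Fintype A] [Fintype B] [DecidableEq A] [DecidableEq B]
    (I : PrefSys A B) (hI : I.IsValid) (n0 : ℕ)
    (hA : Fintype.card A = n0) (hB : Fintype.card B = n0)
    (M : Finset (A × B)) (hM : IsPerfectMatching I M)
    (hpop : ∀ N : Finset (A × B), IsPerfectMatching I N → 0 ≤ Delta I M N) :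
    ∃ S : Finset (AStar A × BStar A B),
      IsStable (starSys I) S ∧ IsPerfectMatching (starSys I) S ∧ proj S = M := by
  obtain ⟨m, hm, rfl⟩ := hM.exists_eq_matchingOfEquiv
  obtain ⟨h, hh⟩ := exists_isLevelCertificate hI hm fun n hn =>
    hpop _ (isPerfectMatching_matchingOfEquiv hn)
  exact ⟨matchingOfEquiv (starEquiv m h), isStable_matchingOfEquiv_starEquiv hI hm hh,
    isPerfectMatching_matchingOfEquiv (starSys_E_starEquiv hm), proj_matchingOfEquiv_starEquiv m h⟩

end PopMax
end
end

section
/- Let M be a popular max-matching in G, let u be a node unmatched in M, and let v be a neighbor of u in G. Then v is matched in M and v prefers its partner M(v) to u. -/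
open Classical

noncomputable section

namespace PopMax

variable {A B : Type*}

/-!
Suppose an edge `(a, b)` blocks `M`. Match `a` with `b`, dropping their edges of `M`: both `a` and
`b` prefer the resulting matching `N`, and only their old partners can prefer `M`. If `a` or `b` is
unmatched in `M`, at most one edge is lost and at most one old partner is hurt, so `N` is again a
maximum matching and `Δ(M,N) < 0`. Hence no edge at an unmatched node blocks a popular max-matching.
-/

section Basic

variable {I : PrefSys A B} {M N : Finset (A × B)} {a a' : A} {b b' : B}

theorem PrefSys.IsValid.prefA_asymm (hI : I.IsValid) (h : I.prefA a b b') : ¬ I.prefA a b' b :=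
  fun h' => hI.1 a b (hI.2.1 a b b' b h h')

theorem PrefSys.IsValid.prefB_asymm (hI : I.IsValid) (h : I.prefB b a a') : ¬ I.prefB b a' a :=
  fun h' => hI.2.2.2.1 b a (hI.2.2.2.2.1 b a a' a h h')

theorem IsMatching.eq_right (hM : IsMatching I M) (h : (a, b) ∈ M) (h' : (a, b') ∈ M) : b = b' :=
  congrArg Prod.snd (hM.2.1 _ h _ h' rfl)

theorem IsMatching.eq_left (hM : IsMatching I M) (h : (a, b) ∈ M) (h' : (a', b) ∈ M) : a = a' :=
  congrArg Prod.fst (hM.2.2 _ h _ h' rfl)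

theorem matchedA_of_prefersA (h : prefersA I a M N) : matchedA M a :=
  h.imp fun _ => And.left

theorem matchedB_of_prefersB (h : prefersB I b M N) : matchedB M b :=
  h.imp fun _ => And.left

theorem prefersA_iff_of_mem (hM : IsMatching I M) (hN : IsMatching I N)
    (h : (a, b) ∈ M) (h' : (a, b') ∈ N) : prefersA I a M N ↔ I.prefA a b b' := by
  constructor
  · rintro ⟨c, hc, hunmatched | ⟨c', hc', hpref⟩⟩
    · exact absurd ⟨b', h'⟩ hunmatched
    · rwa [hM.eq_right h hc, hN.eq_right h' hc']
  · exact fun hpref => ⟨b, h, Or.inr ⟨b', h', hpref⟩⟩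

theorem prefersB_iff_of_mem (hM : IsMatching I M) (hN : IsMatching I N)
    (h : (a, b) ∈ M) (h' : (a', b) ∈ N) : prefersB I b M N ↔ I.prefB b a a' := by
  constructor
  · rintro ⟨c, hc, hunmatched | ⟨c', hc', hpref⟩⟩
    · exact absurd ⟨a', h'⟩ hunmatched
    · rwa [hM.eq_left h hc, hN.eq_left h' hc']
  · exact fun hpref => ⟨a, h, Or.inr ⟨a', h', hpref⟩⟩

theorem prefersA_asymm (hI : I.IsValid) (hM : IsMatching I M) (hN : IsMatching I N)
    (h : prefersA I a M N) : ¬ prefersA I a N M := by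
  intro h'
  obtain ⟨b, hb⟩ := matchedA_of_prefersA h
  obtain ⟨b', hb'⟩ := matchedA_of_prefersA h'
  exact hI.prefA_asymm ((prefersA_iff_of_mem hM hN hb hb').1 h)
    ((prefersA_iff_of_mem hN hM hb' hb).1 h')

theorem prefersB_asymm (hI : I.IsValid) (hM : IsMatching I M) (hN : IsMatching I N)
    (h : prefersB I b M N) : ¬ prefersB I b N M := by
  intro h'
  obtain ⟨a, ha⟩ := matchedB_of_prefersB h
  obtain ⟨a', ha'⟩ := matchedB_of_prefersB h'
  exact hI.prefB_asymm ((prefersB_iff_of_mem hM hN ha ha').1 h)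
    ((prefersB_iff_of_mem hN hM ha' ha).1 h')

theorem exists_prefB_of_not_blocks (hI : I.IsValid) (hM : IsMatching I M) (hE : I.E a b)
    (ha : ¬ matchedA M a) (hblock : ¬ Blocks I M a b) : ∃ a', (a', b) ∈ M ∧ I.prefB b a' a := by
  have hab : (a, b) ∉ M := fun h => ha ⟨b, h⟩
  have hb : ¬ (¬ matchedB M b ∨ ∃ a', (a', b) ∈ M ∧ I.prefB b a a') :=
    fun h => hblock ⟨hE, hab, Or.inl ha, h⟩
  push Not at hb
  obtain ⟨⟨a', ha'⟩, hb⟩ := hb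
  have hne : a' ≠ a := fun h => hab (h ▸ ha')
  exact ⟨a', ha', (hI.2.2.2.2.2 b a' a (hM.1 _ ha') hE hne).resolve_right (hb a' ha')⟩

theorem exists_prefA_of_not_blocks (hI : I.IsValid) (hM : IsMatching I M) (hE : I.E a b)
    (hb : ¬ matchedB M b) (hblock : ¬ Blocks I M a b) : ∃ b', (a, b') ∈ M ∧ I.prefA a b' b := by
  have hab : (a, b) ∉ M := fun h => hb ⟨a, h⟩
  have ha : ¬ (¬ matchedA M a ∨ ∃ b', (a, b') ∈ M ∧ I.prefA a b b') :=
    fun h => hblock ⟨hE, hab, h, Or.inl hb⟩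
  push Not at ha
  obtain ⟨⟨b', hb'⟩, ha⟩ := ha
  have hne : b' ≠ b := fun h => hab (h ▸ hb')
  exact ⟨b', hb', (hI.2.2.1 a b' b (hM.1 _ hb') hE hne).resolve_right (ha b' hb')⟩

end Basic

/-- The matching obtained from `M` by matching `a` with `b`, after dropping the edges of `M`
incident to `a` or `b`. It is the rival of `M` when `(a, b)` blocks `M`. -/
def rematch (M : Finset (A × B)) (a : A) (b : B) : Finset (A × B) :=
  insert (a, b) {p ∈ M | ¬ (p.1 = a ∨ p.2 = b)}

section Rematch

open scoped Finset

variable {I : PrefSys A B} {M : Finset (A × B)} {a c : A} {b d : B}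

theorem mem_rematch :
    (c, d) ∈ rematch M a b ↔ (c = a ∧ d = b) ∨ ((c, d) ∈ M ∧ c ≠ a ∧ d ≠ b) := by
  simp only [rematch, Finset.mem_insert, Finset.mem_filter, Prod.mk.injEq, not_or, ne_eq]

theorem mem_rematch_self : (a, b) ∈ rematch M a b :=
  Finset.mem_insert_self _ _

protected theorem IsMatching.rematch (hM : IsMatching I M) (hE : I.E a b) :
    IsMatching I (rematch M a b) := by
  refine ⟨?_, ?_, ?_⟩
  · rintro ⟨c, d⟩ h
    rcases mem_rematch.1 h with ⟨rfl, rfl⟩ | ⟨h, -⟩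
    exacts [hE, hM.1 _ h]
  · rintro ⟨c, d⟩ h ⟨c', d'⟩ h' rfl
    grind [mem_rematch, hM.eq_right]
  · rintro ⟨c, d⟩ h ⟨c', d'⟩ h' rfl
    grind [mem_rematch, hM.eq_left]

theorem IsMatching.card_incident_le_one (hM : IsMatching I M)
    (hunmatched : ¬ matchedA M a ∨ ¬ matchedB M b) :
    #{p ∈ M | p.1 = a ∨ p.2 = b} ≤ 1 := by
  refine Finset.card_le_one.2 fun p hp q hq => ?_
  obtain ⟨hpM, hp⟩ := Finset.mem_filter.1 hp
  obtain ⟨hqM, hq⟩ := Finset.mem_filter.1 hq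
  rcases hunmatched with ha | hb
  · have snd_eq {r : A × B} (hr : r ∈ M) (h : r.1 = a ∨ r.2 = b) : r.2 = b :=
      h.resolve_left fun h => ha ⟨r.2, h ▸ hr⟩
    exact hM.2.2 p hpM q hqM ((snd_eq hpM hp).trans (snd_eq hqM hq).symm)
  · have fst_eq {r : A × B} (hr : r ∈ M) (h : r.1 = a ∨ r.2 = b) : r.1 = a :=
      h.resolve_right fun h => hb ⟨r.1, h ▸ hr⟩
    exact hM.2.1 p hpM q hqM ((fst_eq hpM hp).trans (fst_eq hqM hq).symm)

theorem IsMatching.card_le_card_rematch (hM : IsMatching I M)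
    (hunmatched : ¬ matchedA M a ∨ ¬ matchedB M b) : #M ≤ #(rematch M a b) := by
  calc #M = #{p ∈ M | p.1 = a ∨ p.2 = b} + #{p ∈ M | ¬ (p.1 = a ∨ p.2 = b)} :=
        (Finset.card_filter_add_card_filter_not _).symm
    _ ≤ 1 + #{p ∈ M | ¬ (p.1 = a ∨ p.2 = b)} := by
        gcongr
        exact hM.card_incident_le_one hunmatched
    _ = #(rematch M a b) := by
        rw [rematch, Finset.card_insert_of_notMem (by simp), add_comm]

protected theorem IsMaximumMatching.rematch (hM : IsMaximumMatching I M) (hE : I.E a b)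
    (hunmatched : ¬ matchedA M a ∨ ¬ matchedB M b) :
    IsMaximumMatching I (rematch M a b) :=
  ⟨hM.1.rematch hE, fun N hN => (hM.2 N hN).trans (hM.1.card_le_card_rematch hunmatched)⟩

theorem Blocks.prefersA_rematch (h : Blocks I M a b) : prefersA I a (rematch M a b) M :=
  ⟨b, mem_rematch_self, h.2.2.1⟩

theorem Blocks.prefersB_rematch (h : Blocks I M a b) : prefersB I b (rematch M a b) M :=
  ⟨a, mem_rematch_self, h.2.2.2⟩

theorem Blocks.mem_of_prefersA_rematch (h : Blocks I M a b) (hI : I.IsValid) (hM : IsMatching I M)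
    (hc : prefersA I c M (rematch M a b)) : (c, b) ∈ M := by
  have hN := hM.rematch h.1
  have hca : c ≠ a := by
    rintro rfl
    exact prefersA_asymm hI hM hN hc h.prefersA_rematch
  obtain ⟨d, hd⟩ := matchedA_of_prefersA hc
  by_contra hcb
  have hdb : d ≠ b := fun hdb => hcb (hdb ▸ hd)
  have hd' : (c, d) ∈ rematch M a b := mem_rematch.2 (Or.inr ⟨hd, hca, hdb⟩)
  exact hI.1 c d ((prefersA_iff_of_mem hM hN hd hd').1 hc)

theorem Blocks.mem_of_prefersB_rematch (h : Blocks I M a b) (hI : I.IsValid) (hM : IsMatching I M)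
    (hd : prefersB I d M (rematch M a b)) : (a, d) ∈ M := by
  have hN := hM.rematch h.1
  have hdb : d ≠ b := by
    rintro rfl
    exact prefersB_asymm hI hM hN hd h.prefersB_rematch
  obtain ⟨c, hc⟩ := matchedB_of_prefersB hd
  by_contra had
  have hca : c ≠ a := fun hca => had (hca ▸ hc)
  have hc' : (c, d) ∈ rematch M a b := mem_rematch.2 (Or.inr ⟨hc, hca, hdb⟩)
  exact hI.2.2.2.1 d c ((prefersB_iff_of_mem hM hN hc hc').1 hd)

variable [Fintype A] [Fintype B]

theorem Blocks.one_lt_phi_rematch (h : Blocks I M a b) : 1 < phi I (rematch M a b) M :=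
  Finset.one_lt_card.2
    ⟨Sum.inl a, Finset.mem_filter.2 ⟨Finset.mem_univ _, h.prefersA_rematch⟩,
      Sum.inr b, Finset.mem_filter.2 ⟨Finset.mem_univ _, h.prefersB_rematch⟩, Sum.inl_ne_inr⟩

theorem Blocks.phi_rematch_le_one (h : Blocks I M a b) (hI : I.IsValid) (hM : IsMatching I M)
    (hunmatched : ¬ matchedA M a ∨ ¬ matchedB M b) : phi I M (rematch M a b) ≤ 1 := by
  refine Finset.card_le_one.2 fun u hu v hv => ?_
  replace hu := (Finset.mem_filter.1 hu).2
  replace hv := (Finset.mem_filter.1 hv).2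
  have mem_left {c : A} (hc : prefers I (Sum.inl c) M (rematch M a b)) : (c, b) ∈ M :=
    h.mem_of_prefersA_rematch hI hM hc
  have mem_right {d : B} (hd : prefers I (Sum.inr d) M (rematch M a b)) : (a, d) ∈ M :=
    h.mem_of_prefersB_rematch hI hM hd
  have not_both {c : A} {d : B} (hc : (c, b) ∈ M) (hd : (a, d) ∈ M) : False :=
    hunmatched.elim (· ⟨d, hd⟩) (· ⟨c, hc⟩)
  rcases u with c | d <;> rcases v with c' | d'
  · exact congrArg Sum.inl (hM.eq_left (mem_left hu) (mem_left hv))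
  · exact (not_both (mem_left hu) (mem_right hv)).elim
  · exact (not_both (mem_left hv) (mem_right hu)).elim
  · exact congrArg Sum.inr (hM.eq_right (mem_right hu) (mem_right hv))

theorem IsPopularMaxMatching.not_blocks_of_unmatched (hM : IsPopularMaxMatching I M)
    (hI : I.IsValid) (hunmatched : ¬ matchedA M a ∨ ¬ matchedB M b) : ¬ Blocks I M a b := by
  intro h
  have hDelta : 0 ≤ Delta I M (rematch M a b) := hM.2 _ (hM.1.rematch h.1 hunmatched)
  have hlt : phi I M (rematch M a b) < phi I (rematch M a b) M :=
    (h.phi_rematch_le_one hI hM.1.1 hunmatched).trans_lt h.one_lt_phi_rematch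
  unfold Delta at hDelta
  lia

end Rematch

/-- If `M` is a popular max-matching, `u` is unmatched in `M` and
`v` is a neighbor of `u`, then `v` is matched in `M` and prefers `M(v)` to `u`. -/
theorem stmt15 {A B : Type*} [Fintype A] [Fintype B] [DecidableEq A] [DecidableEq B]
    (I : PrefSys A B) (hI : I.IsValid) (M : Finset (A × B))
    (hM : IsPopularMaxMatching I M) :
    (∀ (a : A) (b : B), I.E a b → ¬ matchedA M a →
        ∃ a', (a', b) ∈ M ∧ I.prefB b a' a) ∧
    (∀ (a : A) (b : B), I.E a b → ¬ matchedB M b →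
        ∃ b', (a, b') ∈ M ∧ I.prefA a b' b) := by
  constructor
  · intro a b hE ha
    exact exists_prefB_of_not_blocks hI hM.1.1 hE ha (hM.not_blocks_of_unmatched hI (Or.inl ha))
  · intro a b hE hb
    exact exists_prefA_of_not_blocks hI hM.1.1 hE hb (hM.not_blocks_of_unmatched hI (Or.inr hb))

end PopMax
end
end
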